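/- arXiv:2605.19819 — 7 statements merged into one kernel-verified Lean document; each statement's English description precedes it below -/
import Mathlib

section
/- The logic L(Kh) is strictly more expressive than the logic L(A) over LTSs: for distinct propositional symbols p and q, there is no L(A) formula α such that for every LTS M, ⟦α⟧_M = ⟦Kh(p,q)⟧_M. Concretely, there exist two LTSs M and M' with the same set of states and the same valuation (hence satisfying exactly the same L(A) formulas, since the semantics of L(A) does not refer to the relations) such that ⟦Kh(p,q)⟧_M ≠ ∅ while ⟦Kh(p,q)⟧_{M'} = ∅. -/
/-!
The truth set of an L(A) formula depends only on the valuation (`atruth_congr`), so an L(A) formula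
equivalent to `Kh(p,q)` would make `Kh(p,q)` have the same truth set on any two LTSs that share
states and valuation. This fails on two states, one satisfying only `p` and the other not `p` but
`q`: if every action leads to the `q`-state, then any one-action plan witnesses `Kh(p,q)`; if there
are no transitions, then only the empty plan is strongly executable at the `p`-state, and it stays
there (`truth_moving`, `truth_stuck`).
-/

/-- Formulas of the logic L(Kh): p | ¬φ | φ∨ψ | Kh(φ,ψ). -/
inductive KhForm (P : Type) : Type
  | prop : P → KhForm P
  | neg : KhForm P → KhForm P
  | or : KhForm P → KhForm P → KhForm P
  | kh : KhForm P → KhForm P → KhForm P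
  deriving DecidableEq

namespace KhForm

/-- Conjunction, as the usual abbreviation. -/
def and {P : Type} (φ ψ : KhForm P) : KhForm P := .neg (.or (.neg φ) (.neg ψ))

/-- ⊥ abbreviates p ∧ ¬p for a fixed propositional symbol p. -/
def bot {P : Type} (p : P) : KhForm P := and (.prop p) (.neg (.prop p))

/-- ⊤ abbreviates ¬⊥. -/
def top {P : Type} (p : P) : KhForm P := .neg (bot p)

/-- Number of symbols of a formula. -/
def size {P : Type} : KhForm P → ℕ
  | .prop _ => 1
  | .neg φ => size φ + 1
  | .or φ ψ => size φ + size ψ + 1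
  | .kh φ ψ => size φ + size ψ + 1

end KhForm

/-- A formula is Kh-free if it contains no occurrence of Kh. -/
def KhFree {P : Type} : KhForm P → Prop
  | .prop _ => True
  | .neg φ => KhFree φ
  | .or φ ψ => KhFree φ ∧ KhFree ψ
  | .kh _ _ => False

/-- A labelled transition system over propositional symbols `P`, action symbols `A`
and states `S`: a family of binary relations on `S` and a valuation. -/
structure LTS (P A S : Type) where
  R : A → S → S → Prop
  V : P → Set S

/-- The relation `R_π` associated to a plan (finite word over `A`):
`R_ε` is the identity and `R_{πa} = R_π ; R_a`. -/
def runPlan {P A S : Type} (M : LTS P A S) : List A → S → S → Prop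
  | [] => fun s t => s = t
  | a :: π => fun s t => ∃ u, M.R a s u ∧ runPlan M π u t

/-- `R_π(X)`, the image of a set of states under a plan. -/
def planImage {P A S : Type} (M : LTS P A S) (π : List A) (X : Set S) : Set S :=
  { t | ∃ s ∈ X, runPlan M π s t }

/-- Strong executability of a plan at a state: at every step of the plan, the
next action is guaranteed to be performable. -/
def SE {P A S : Type} (M : LTS P A S) : List A → S → Prop
  | [] => fun _ => True
  | a :: π => fun s => (∃ u, M.R a s u) ∧ ∀ u, M.R a s u → SE M π u

/-- Truth sets: `⟦Kh(φ,ψ)⟧ = S` if there is a plan π with `⟦φ⟧ ⊆ SE(π)` and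
`R_π(⟦φ⟧) ⊆ ⟦ψ⟧`, and `∅` otherwise. -/
def truth {P A S : Type} (M : LTS P A S) : KhForm P → Set S
  | .prop p => M.V p
  | .neg φ => (truth M φ)ᶜ
  | .or φ ψ => truth M φ ∪ truth M ψ
  | .kh φ ψ => { _s | ∃ π : List A,
      (∀ s ∈ truth M φ, SE M π s) ∧ planImage M π (truth M φ) ⊆ truth M ψ }

/-- π is a witness for Kh(φ,ψ) in M. -/
def IsWitness {P A S : Type} (M : LTS P A S) (π : List A) (φ ψ : KhForm P) : Prop :=
  (∀ s ∈ truth M φ, SE M π s) ∧ planImage M π (truth M φ) ⊆ truth M ψ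

/-- The universal modality `Aφ`, as the abbreviation `Kh(¬φ,⊥)`. -/
def Aform {P : Type} (p : P) (φ : KhForm P) : KhForm P := .kh (.neg φ) (KhForm.bot p)

/-- The existential modality `Eφ = ¬A¬φ`. -/
def Eform {P : Type} (p : P) (φ : KhForm P) : KhForm P := .neg (Aform p (.neg φ))

/-- Subjective formulas: Boolean combinations (¬, ∨) of positive atoms
Kh(ψ,χ) with ψ, χ Kh-free. -/
inductive Subjective {P : Type} : KhForm P → Prop
  | atom {ψ χ : KhForm P} : KhFree ψ → KhFree χ → Subjective (.kh ψ χ)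
  | neg {φ : KhForm P} : Subjective φ → Subjective (.neg φ)
  | or {φ ψ : KhForm P} : Subjective φ → Subjective ψ → Subjective (.or φ ψ)

/-- Formulas of the logic L(A): p | ¬α | α∨β | Aα. -/
inductive AForm (P : Type) : Type
  | prop : P → AForm P
  | neg : AForm P → AForm P
  | or : AForm P → AForm P → AForm P
  | all : AForm P → AForm P

/-- Truth sets for L(A) formulas over an LTS. -/
def atruth {P A S : Type} (M : LTS P A S) : AForm P → Set S
  | .prop p => M.V p
  | .neg α => (atruth M α)ᶜ
  | .or α β => atruth M α ∪ atruth M β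
  | .all α => { _s | atruth M α = Set.univ }

/-- `CBar I D s t`: the pair (s,t) is in the reflexive-transitive closure (on I)
of `D̄ = (I×I) ∖ D`. -/
def CBar {ι : Type} (I : Finset ι) (D : Finset (ι × ι)) (s t : ι) : Prop :=
  s ∈ I ∧ t ∈ I ∧ Relation.ReflTransGen (fun u v => u ∈ I ∧ v ∈ I ∧ (u, v) ∉ D) s t

/-- `ρ` occurs (as a subformula) in a formula. -/
inductive IsSubformula {P : Type} (ρ : KhForm P) : KhForm P → Prop
  | refl : IsSubformula ρ ρ
  | neg {φ : KhForm P} : IsSubformula ρ φ → IsSubformula ρ (.neg φ)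
  | orL {φ ψ : KhForm P} : IsSubformula ρ φ → IsSubformula ρ (.or φ ψ)
  | orR {φ ψ : KhForm P} : IsSubformula ρ ψ → IsSubformula ρ (.or φ ψ)
  | khL {φ ψ : KhForm P} : IsSubformula ρ φ → IsSubformula ρ (.kh φ ψ)
  | khR {φ ψ : KhForm P} : IsSubformula ρ ψ → IsSubformula ρ (.kh φ ψ)

/-- Replace all occurrences of the atom Kh(ψ,χ) by ρ. -/
def substKh {P : Type} [DecidableEq P] (ψ χ ρ : KhForm P) : KhForm P → KhForm P
  | .prop q => .prop q
  | .neg φ => .neg (substKh ψ χ ρ φ)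
  | .or φ₁ φ₂ => .or (substKh ψ χ ρ φ₁) (substKh ψ χ ρ φ₂)
  | .kh φ₁ φ₂ =>
      if φ₁ = ψ ∧ φ₂ = χ then ρ
      else .kh (substKh ψ χ ρ φ₁) (substKh ψ χ ρ φ₂)

theorem atruth_congr {P A S : Type} {M M' : LTS P A S} (h : M.V = M'.V) (α : AForm P) :
    atruth M α = atruth M' α := by
  induction α with
  | prop r => simp only [atruth, h]
  | neg α ih => simp only [atruth, ih]
  | or α β ihα ihβ => simp only [atruth, ihα, ihβ]
  | all α ih => simp only [atruth, ih]

/-- The valuation on two states under which `true` satisfies exactly `p`, and `false` satisfies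
exactly the propositional symbols other than `p`. -/
def twoVal {P : Type} (p : P) : P → Set Bool := fun r => {s | s = true ↔ r = p}

/-- The two-state LTS in which every action leads from every state to `false`. -/
def movingLTS {P : Type} (A : Type) (p : P) : LTS P A Bool := ⟨fun _ _ t => t = false, twoVal p⟩

/-- The two-state LTS without transitions. -/
def stuckLTS {P : Type} (A : Type) (p : P) : LTS P A Bool := ⟨fun _ _ _ => False, twoVal p⟩

theorem truth_moving {P A : Type} [Nonempty A] {p q : P} (hpq : p ≠ q) :
    truth (movingLTS A p) (.kh (.prop p) (.prop q)) ≠ ∅ := by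
  obtain ⟨a⟩ := ‹Nonempty A›
  refine Set.Nonempty.ne_empty ⟨true, [a], ?_, ?_⟩
  · intro s _
    exact ⟨⟨false, rfl⟩, fun _ _ => trivial⟩
  · rintro t ⟨s, _, u, hu, rfl⟩
    have hu' : u = false := hu
    subst hu'
    simp [truth, movingLTS, twoVal, hpq.symm]

theorem truth_stuck {P A : Type} {p q : P} (hpq : p ≠ q) :
    truth (stuckLTS A p) (.kh (.prop p) (.prop q)) = ∅ := by
  refine Set.eq_empty_of_forall_notMem ?_
  rintro _ ⟨π, hSE, hsub⟩
  have hp : true ∈ truth (stuckLTS A p) (.prop p) := by simp [truth, stuckLTS, twoVal]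
  cases π with
  | nil =>
    have hq : true ∈ truth (stuckLTS A p) (.prop q) := hsub ⟨true, hp, rfl⟩
    simp [truth, stuckLTS, twoVal, hpq.symm] at hq
  | cons a π =>
    obtain ⟨⟨_, hu⟩, _⟩ := hSE true hp
    exact hu

/-- L(Kh) is strictly more expressive than L(A) over LTSs:
no L(A) formula has, on every LTS, the same truth set as Kh(p,q); concretely,
there are two LTSs with the same states and valuation on which Kh(p,q) has
different (nonempty vs. empty) truth sets. -/
theorem kh_more_expressive_than_A
    (P A : Type) [Countable P] [Countable A] [Nonempty A]
    (p q : P) (hpq : p ≠ q) :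
    (¬ ∃ α : AForm P, ∀ (S : Type) (_ : Nonempty S) (M : LTS P A S),
        atruth M α = truth M (KhForm.kh (.prop p) (.prop q))) ∧
    (∃ (S : Type) (_ : Nonempty S) (M M' : LTS P A S),
        M.V = M'.V ∧
        truth M (KhForm.kh (.prop p) (.prop q)) ≠ ∅ ∧
        truth M' (KhForm.kh (.prop p) (.prop q)) = ∅) := by
  refine ⟨?_, Bool, inferInstance, movingLTS A p, stuckLTS A p, rfl,
    truth_moving hpq, truth_stuck hpq⟩
  rintro ⟨α, hα⟩
  apply truth_moving (A := A) hpq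
  rw [← hα Bool inferInstance (movingLTS A p),
    atruth_congr (M := movingLTS A p) (M' := stuckLTS A p) rfl α,
    hα Bool inferInstance, truth_stuck hpq]
end

section
/- Let I be a finite index set and, for each i ∈ I, let ψ_i and χ_i be Kh-free formulas. Set φ⁺ = ⋀_{i∈I} Kh(ψ_i, χ_i) and θ⁺ = ⋀_{i∈I} (A(¬ψ_i) ∨ Eχ_i). Then φ⁺ is satisfiable (in some LTS) if and only if θ⁺ is satisfiable (in some LTS). -/
theorem exists_run_of_SE {P A S : Type} (M : LTS P A S) (π : List A) (s : S)
    (h : SE M π s) : ∃ t, runPlan M π s t := by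
  induction π generalizing s with
  | nil => exact ⟨s, rfl⟩
  | cons a π ih =>
    obtain ⟨⟨u, hu⟩, hall⟩ := h
    obtain ⟨t, ht⟩ := ih u (hall u hu)
    exact ⟨t, u, hu, ht⟩

theorem not_mem_truth_bot {P A S : Type} (M : LTS P A S) (p : P) (s : S) :
    s ∉ truth M (KhForm.bot p) := by
  simp [KhForm.bot, KhForm.and, truth]

/-- The abbreviation `A` is the universal modality: a plan leading from the states outside `⟦φ⟧`
to `⊥` exists only if there are no such states. -/
theorem mem_truth_Aform {P A S : Type} (M : LTS P A S) (p : P) (φ : KhForm P) (s : S) :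
    s ∈ truth M (Aform p φ) ↔ ∀ t, t ∈ truth M φ := by
  constructor
  · rintro ⟨π, hSE, himg⟩ t
    by_contra ht
    obtain ⟨u, hu⟩ := exists_run_of_SE M π t (hSE t ht)
    exact not_mem_truth_bot M p u (himg ⟨t, ht, hu⟩)
  · intro h
    refine ⟨[], fun t ht => absurd (h t) ht, ?_⟩
    rintro u ⟨t, ht, -⟩
    exact absurd (h t) ht

theorem mem_truth_Eform {P A S : Type} (M : LTS P A S) (p : P) (φ : KhForm P) (s : S) :
    s ∈ truth M (Eform p φ) ↔ ∃ t, t ∈ truth M φ := by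
  change ¬ s ∈ truth M (Aform p (.neg φ)) ↔ _
  rw [mem_truth_Aform]
  simp [truth]

theorem mem_truth_clause {P A S : Type} (M : LTS P A S) (p : P) (ψ χ : KhForm P) (s : S) :
    s ∈ truth M (KhForm.or (Aform p (.neg ψ)) (Eform p χ)) ↔
      ((∃ t, t ∈ truth M ψ) → ∃ t, t ∈ truth M χ) := by
  change s ∈ truth M (Aform p (.neg ψ)) ∨ s ∈ truth M (Eform p χ) ↔ _
  rw [mem_truth_Aform, mem_truth_Eform, imp_iff_not_or]
  simp [truth]

theorem truth_eq_of_khFree {P A S : Type} (M N : LTS P A S) (hV : M.V = N.V)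
    (φ : KhForm P) (h : KhFree φ) : truth M φ = truth N φ := by
  induction φ with
  | prop q => simp [truth, hV]
  | neg φ ih => simp [truth, ih h]
  | or φ ψ ih₁ ih₂ => simp [truth, ih₁ h.1, ih₂ h.2]
  | kh => exact h.elim

/-- The LTS with the states and valuation of `M` in which the action `e i` leads from each
`ψ i`-state of `M` to each `χ i`-state of `M`, and there are no other transitions. -/
def actionModel {P A S ι : Type} (M : LTS P A S) (I : Finset ι) (e : I → A)
    (ψ χ : ι → KhForm P) : LTS P A S where
  R a s t := ∃ i : I, e i = a ∧ s ∈ truth M (ψ i) ∧ t ∈ truth M (χ i)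
  V := M.V

/-- φ⁺ = ⋀_{i∈I} Kh(ψ_i,χ_i) is satisfiable iff
θ⁺ = ⋀_{i∈I} (A(¬ψ_i) ∨ Eχ_i) is satisfiable. -/
theorem satplus
    (P A ι : Type) [Countable P] [Countable A] [Infinite A]
    (p : P) (I : Finset ι) (ψ χ : ι → KhForm P)
    (hψ : ∀ i ∈ I, KhFree (ψ i)) (hχ : ∀ i ∈ I, KhFree (χ i)) :
    (∃ (S : Type) (_ : Nonempty S) (M : LTS P A S) (s : S),
        ∀ i ∈ I, s ∈ truth M (KhForm.kh (ψ i) (χ i))) ↔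
    (∃ (S : Type) (_ : Nonempty S) (M : LTS P A S) (s : S),
        ∀ i ∈ I, s ∈ truth M (KhForm.or (Aform p (.neg (ψ i))) (Eform p (χ i)))) := by
  constructor
  · rintro ⟨S, hS, M, s, h⟩
    refine ⟨S, hS, M, s, fun i hi => (mem_truth_clause M p _ _ s).2 ?_⟩
    rintro ⟨t, ht⟩
    obtain ⟨π, hSE, himg⟩ := h i hi
    obtain ⟨u, hu⟩ := exists_run_of_SE M π t (hSE t ht)
    exact ⟨u, himg ⟨t, ht, hu⟩⟩
  · rintro ⟨S, hS, M, s, h⟩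
    obtain ⟨e, he⟩ : ∃ e : I → A, Function.Injective e :=
      ⟨fun i => Infinite.natEmbedding A (I.equivFin i),
        (Infinite.natEmbedding A).injective.comp
          (Fin.val_injective.comp I.equivFin.injective)⟩
    refine ⟨S, hS, actionModel M I e ψ χ, s, fun i hi => ⟨[e ⟨i, hi⟩], ?_, ?_⟩⟩
    · intro t ht
      rw [truth_eq_of_khFree (actionModel M I e ψ χ) M rfl _ (hψ i hi)] at ht
      obtain ⟨u, hu⟩ := (mem_truth_clause M p _ _ s).1 (h i hi) ⟨t, ht⟩
      exact ⟨⟨u, ⟨i, hi⟩, rfl, ht, hu⟩, fun _ _ => trivial⟩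
    · rw [truth_eq_of_khFree (actionModel M I e ψ χ) M rfl _ (hχ i hi)]
      rintro u ⟨t, -, v, ⟨j, hj, -, hv⟩, rfl⟩
      obtain rfl := he hj
      exact hv
end

section
/- There is a constant c such that every satisfiable L(Kh) formula φ has a model of size cubic in the size of φ: if ⟦φ⟧ ≠ ∅ in some LTS, then there is an LTS M = ⟨S, (R_a)_{a∈Act}, V⟩ with ⟦φ⟧_M ≠ ∅ and |S| ≤ c·|φ|³ + 1, where |φ| denotes the number of symbols of φ (in particular, |S| = O(|φ|³)). -/
namespace KhSmall

variable {P A S : Type}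

/-- The plan `π` is strongly executable throughout `X` and sends `X` into `Y`: a `Kh`-witness, for
arbitrary sets of states in place of truth sets. -/
def Reach (M : LTS P A S) (X Y : Set S) (π : List A) : Prop :=
  (∀ s ∈ X, SE M π s) ∧ planImage M π X ⊆ Y

theorem se_append (M : LTS P A S) (π π' : List A) (s : S)
    (h : SE M π s) (h' : ∀ t, runPlan M π s t → SE M π' t) : SE M (π ++ π') s := by
  induction π generalizing s with
  | nil => exact h' s rfl
  | cons a π ih =>
    exact ⟨h.1, fun u hu => ih u (h.2 u hu) fun t ht => h' t ⟨u, hu, ht⟩⟩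

theorem runPlan_append (M : LTS P A S) (π π' : List A) (s t : S)
    (h : runPlan M (π ++ π') s t) : ∃ u, runPlan M π s u ∧ runPlan M π' u t := by
  induction π generalizing s with
  | nil => exact ⟨s, rfl, h⟩
  | cons a π ih =>
    obtain ⟨v, hv, h⟩ := h
    obtain ⟨u, hu, hut⟩ := ih v h
    exact ⟨u, ⟨v, hv, hu⟩, hut⟩

theorem exists_runPlan_of_se (M : LTS P A S) (π : List A) (s : S) (h : SE M π s) :
    ∃ t, runPlan M π s t := by
  induction π generalizing s with
  | nil => exact ⟨s, rfl⟩
  | cons a π ih =>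
    obtain ⟨⟨u, hu⟩, h⟩ := h
    obtain ⟨t, ht⟩ := ih u (h u hu)
    exact ⟨t, u, hu, ht⟩

theorem Reach.append {M : LTS P A S} {X Y Z : Set S} {π π' : List A}
    (h : Reach M X Y π) (h' : Reach M Y Z π') : Reach M X Z (π ++ π') := by
  refine ⟨fun s hs => se_append M π π' s (h.1 s hs) fun t ht => h'.1 t (h.2 ⟨s, hs, ht⟩), ?_⟩
  rintro t ⟨s, hs, ht⟩
  obtain ⟨u, hu, hut⟩ := runPlan_append M π π' s t ht
  exact h'.2 ⟨u, h.2 ⟨s, hs, hu⟩, hut⟩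

/-- The pairs `(ψ, χ)` such that `Kh(ψ,χ)` occurs in the formula, with repetitions. -/
def khs : KhForm P → List (KhForm P × KhForm P)
  | .prop _ => []
  | .neg φ => khs φ
  | .or φ ψ => khs φ ++ khs ψ
  | .kh φ ψ => (φ, ψ) :: (khs φ ++ khs ψ)

theorem length_khs_le (φ : KhForm P) : (khs φ).length ≤ φ.size := by
  induction φ <;> simp [khs, KhForm.size] <;> omega

theorem one_le_size (φ : KhForm P) : 1 ≤ φ.size := by
  cases φ <;> simp [KhForm.size]

/-- The LTS on `T` with labelling map `f : T → S`: the valuation is pulled back along `f`, and for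
each index `i` with `pos i` the action `e i` relates all states over `X i` to all states
over `C i`. -/
def small {ι T : Type} (M : LTS P A S) (f : T → S) (e : ι → A) (pos : ι → Prop)
    (X C : ι → Set S) : LTS P A T where
  R a s t := ∃ i, a = e i ∧ pos i ∧ f s ∈ X i ∧ f t ∈ C i
  V p := f ⁻¹' M.V p

section

variable {ι T : Type} {M : LTS P A S} {f : T → S} {e : ι → A} {pos : ι → Prop}
  {X Y C : ι → Set S} {π : ι → List A}

/-- A plan of the small model unfolds to a plan of `M`, by replacing each action `e i` by `π i`.
The set `Z` is the current set of possible states, itself one of the `X i` or `C i`. -/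
theorem exists_plan_of_small_plan (he : Function.Injective e)
    (hπ : ∀ i, pos i → Reach M (X i) (C i) (π i))
    (hX : ∀ Z, (Z ∈ Set.range X ∨ Z ∈ Set.range C) → ∀ i, f ⁻¹' Z ⊆ f ⁻¹' X i → Z ⊆ X i)
    (hY : ∀ Z, (Z ∈ Set.range X ∨ Z ∈ Set.range C) → ∀ i, f ⁻¹' Z ⊆ f ⁻¹' Y i → Z ⊆ Y i)
    (hne : ∀ Z, (Z ∈ Set.range X ∨ Z ∈ Set.range C) → Z.Nonempty → (f ⁻¹' Z).Nonempty)
    (j : ι) (σ : List A) (Z : Set S) (hZ : Z ∈ Set.range X ∨ Z ∈ Set.range C)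
    (h : Reach (small M f e pos X C) (f ⁻¹' Z) (f ⁻¹' Y j) σ) :
    ∃ τ, Reach M Z (Y j) τ := by
  induction σ generalizing Z with
  | nil =>
    refine ⟨[], fun _ _ => trivial, ?_⟩
    rintro t ⟨s, hs, rfl⟩
    exact hY Z hZ j (fun u hu => h.2 ⟨u, hu, rfl⟩) hs
  | cons a σ ih =>
    rcases Z.eq_empty_or_nonempty with rfl | hZne
    · exact ⟨[], fun _ _ => trivial, fun t ⟨s, hs, _⟩ => hs.elim⟩
    obtain ⟨s₀, hs₀⟩ := hne Z hZ hZne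
    obtain ⟨u₀, i, rfl, hi, hsi, hui⟩ := (h.1 s₀ hs₀).1
    have hZX : Z ⊆ X i := by
      refine hX Z hZ i fun s hs => ?_
      obtain ⟨u, i', hii, _, hs', _⟩ := (h.1 s hs).1
      rw [he hii]
      exact hs'
    have step : ∀ t ∈ f ⁻¹' C i, (small M f e pos X C).R (e i) s₀ t :=
      fun t ht => ⟨i, rfl, hi, hsi, ht⟩
    obtain ⟨τ, hτ⟩ := ih (C i) (Or.inr ⟨i, rfl⟩)
      ⟨fun t ht => (h.1 s₀ hs₀).2 t (step t ht),
        fun v ⟨t, ht, htv⟩ => h.2 ⟨s₀, hs₀, t, step t ht, htv⟩⟩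
    have hZC : Reach M Z (C i) (π i) :=
      ⟨fun s hs => (hπ i hi).1 s (hZX hs),
        fun t ⟨s, hs, hst⟩ => (hπ i hi).2 ⟨s, hZX hs, hst⟩⟩
    exact ⟨π i ++ τ, hZC.append hτ⟩

theorem kh_small_of_kh (he : Function.Injective e)
    (hπ : ∀ i, pos i → Reach M (X i) (C i) (π i)) (hCY : ∀ i, pos i → C i ⊆ Y i)
    (hne : ∀ i, (C i).Nonempty → (f ⁻¹' C i).Nonempty) (i : ι) (hi : pos i) :
    Reach (small M f e pos X C) (f ⁻¹' X i) (f ⁻¹' Y i) [e i] := by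
  constructor
  · intro s hs
    refine ⟨?_, fun _ _ => trivial⟩
    obtain ⟨t, ht⟩ := exists_runPlan_of_se M _ _ ((hπ i hi).1 _ hs)
    obtain ⟨u, hu⟩ := hne i ⟨t, (hπ i hi).2 ⟨f s, hs, ht⟩⟩
    exact ⟨u, i, rfl, hi, hs, hu⟩
  · rintro t ⟨s, _, u, ⟨i', hii, _, _, hu⟩, rfl⟩
    rw [← he hii] at hu
    exact hCY i hi hu

/-- If the small model agrees with `M` on the `Kh`-subformulas of `φ` once their arguments
have the right truth sets, then all of `φ` has the right truth set. -/
theorem truth_small (φ : KhForm P)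
    (h : ∀ q ∈ khs φ, truth (small M f e pos X C) q.1 = f ⁻¹' truth M q.1 →
      truth (small M f e pos X C) q.2 = f ⁻¹' truth M q.2 →
      truth (small M f e pos X C) (.kh q.1 q.2) = f ⁻¹' truth M (.kh q.1 q.2)) :
    truth (small M f e pos X C) φ = f ⁻¹' truth M φ := by
  induction φ with
  | prop p => rfl
  | neg φ ih => simp only [truth, ih h, Set.preimage_compl]
  | or φ ψ ih₁ ih₂ =>
    simp only [khs, List.mem_append] at h
    simp only [truth, ih₁ fun q hq => h q (.inl hq), ih₂ fun q hq => h q (.inr hq),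
      Set.preimage_union]
  | kh φ ψ ih₁ ih₂ =>
    simp only [khs, List.mem_cons, List.mem_append] at h
    exact h (φ, ψ) (.inl rfl) (ih₁ fun q hq => h q (.inr (.inl hq)))
      (ih₂ fun q hq => h q (.inr (.inr hq)))

end

/-- One point of each nonempty difference of the sets `F k ∖ G l`, plus a given point. -/
theorem exists_labelling {κ μ : Type} (F : κ → Set S) (G : μ → Set S) (s₀ : S) :
    ∃ f : Option (κ × μ) → S, f none = s₀ ∧ ∀ k l, f ⁻¹' F k ⊆ f ⁻¹' G l → F k ⊆ G l := by
  classical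
  have hg : ∀ q : κ × μ, ∃ s : S, (F q.1 \ G q.2).Nonempty → s ∈ F q.1 \ G q.2 := by
    intro q
    by_cases h : (F q.1 \ G q.2).Nonempty
    · exact ⟨h.some, fun _ => h.some_mem⟩
    · exact ⟨s₀, fun h' => absurd h' h⟩
  choose g hg using hg
  refine ⟨fun o => o.elim s₀ g, rfl, fun k l h s hs => ?_⟩
  by_contra hsG
  have hmem := hg (k, l) ⟨s, hs, hsG⟩
  exact hmem.2 (h (show some (k, l) ∈ _ from hmem.1))

end KhSmall

open KhSmall

/-- polynomial (cubic) size model property: there is a constant c such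
that every satisfiable L(Kh) formula φ is satisfiable in an LTS with at most
c·|φ|³ + 1 states. -/
theorem cubic_size_model_property
    (P A : Type) [Countable P] [Countable A] [Infinite A] :
    ∃ c : ℕ, ∀ φ : KhForm P,
      (∃ (S : Type) (_ : Nonempty S) (M : LTS P A S), truth M φ ≠ ∅) →
      ∃ (S : Type) (_ : Nonempty S) (_ : Fintype S) (M : LTS P A S),
        truth M φ ≠ ∅ ∧ Fintype.card S ≤ c * φ.size ^ 3 + 1 := by
  refine ⟨6, ?_⟩
  rintro φ ⟨S, _, M, hM⟩
  obtain ⟨s₀, hs₀⟩ := Set.nonempty_iff_ne_empty.mpr hM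
  let n := (khs φ).length
  let X : Fin n → Set S := fun i => truth M ((khs φ).get i).1
  let Y : Fin n → Set S := fun i => truth M ((khs φ).get i).2
  let pos : Fin n → Prop := fun i => ∃ π, Reach M (X i) (Y i) π
  have hπ : ∀ i, ∃ π, pos i → Reach M (X i) (Y i) π := by
    intro i
    by_cases h : pos i
    · exact ⟨h.choose, fun _ => h.choose_spec⟩
    · exact ⟨[], fun h' => absurd h' h⟩
  choose π hπ using hπ
  let C : Fin n → Set S := fun i => planImage M (π i) (X i)
  have hπC : ∀ i, pos i → Reach M (X i) (C i) (π i) :=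
    fun i hi => ⟨(hπ i hi).1, subset_rfl⟩
  have hCY : ∀ i, pos i → C i ⊆ Y i := fun i hi => (hπ i hi).2
  let e : Fin n → A := fun i => Infinite.natEmbedding A i
  have he : Function.Injective e := fun i j h =>
    Fin.ext ((Infinite.natEmbedding A).injective h)
  obtain ⟨f, hf₀, hf⟩ := exists_labelling (Sum.elim X C)
    (fun o : Option (Fin n ⊕ Fin n) => o.elim ∅ (Sum.elim X Y)) s₀
  have hf' : ∀ Z, (Z ∈ Set.range X ∨ Z ∈ Set.range C) → ∀ l,
      f ⁻¹' Z ⊆ f ⁻¹' (Option.elim l ∅ (Sum.elim X Y)) → Z ⊆ Option.elim l ∅ (Sum.elim X Y) := by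
    rintro Z (⟨i, rfl⟩ | ⟨i, rfl⟩) l
    · exact hf (.inl i) l
    · exact hf (.inr i) l
  have hne : ∀ Z, (Z ∈ Set.range X ∨ Z ∈ Set.range C) → Z.Nonempty → (f ⁻¹' Z).Nonempty := by
    intro Z hZ hZne
    by_contra h
    obtain ⟨z, hz⟩ := hZne
    exact hf' Z hZ none (Set.not_nonempty_iff_eq_empty.mp h).subset hz
  refine ⟨Option ((Fin n ⊕ Fin n) × Option (Fin n ⊕ Fin n)), inferInstance, inferInstance,
    small M f e pos X C, ?_, ?_⟩
  · have htruth : truth (small M f e pos X C) φ = f ⁻¹' truth M φ := by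
      refine truth_small φ fun q hq h₁ h₂ => ?_
      obtain ⟨i, rfl⟩ := List.get_of_mem hq
      have key : (∃ σ, Reach (small M f e pos X C) (f ⁻¹' X i) (f ⁻¹' Y i) σ) ↔
          ∃ τ, Reach M (X i) (Y i) τ :=
        ⟨fun ⟨σ, hσ⟩ => exists_plan_of_small_plan he hπC
            (fun Z hZ i => hf' Z hZ (some (.inl i))) (fun Z hZ i => hf' Z hZ (some (.inr i)))
            hne i σ (X i) (.inl ⟨i, rfl⟩) hσ,
          fun h => ⟨_, kh_small_of_kh he hπC hCY (fun i => hne _ (.inr ⟨i, rfl⟩)) i h⟩⟩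
      ext s
      simp only [truth, h₁, h₂]
      exact key
    apply Set.Nonempty.ne_empty
    refine ⟨none, ?_⟩
    rw [htruth, Set.mem_preimage, hf₀]
    exact hs₀
  · have hn : n ≤ φ.size := length_khs_le φ
    have h1 := one_le_size φ
    -- With `n` subformulas `Kh(ψᵢ,χᵢ)` there are `2 * n * (2 * n + 1) + 1` states.
    simp only [Fintype.card_option, Fintype.card_prod, Fintype.card_sum, Fintype.card_fin]
    have hn2 : n * n ≤ φ.size ^ 3 :=
      calc n * n ≤ φ.size * φ.size := Nat.mul_le_mul hn hn
        _ = φ.size ^ 2 := by ring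
        _ ≤ φ.size ^ 3 := Nat.pow_le_pow_right h1 (by norm_num)
    have hn1 : n ≤ φ.size ^ 3 := hn.trans (Nat.le_self_pow (by norm_num) _)
    nlinarith
end

section
/- Witness plans compose: in any LTS M, if the plan π is a witness for Kh(φ,ψ) and the plan π' is a witness for Kh(ψ,χ), then the concatenation ππ' is a witness for Kh(φ,χ). Consequently, if ⟦Kh(φ,ψ)⟧ = S and ⟦Kh(ψ,χ)⟧ = S, then ⟦Kh(φ,χ)⟧ = S. -/
theorem runPlan_append {P A S : Type} (M : LTS P A S) (π π' : List A) (s t : S) :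
    runPlan M (π ++ π') s t ↔ ∃ u, runPlan M π s u ∧ runPlan M π' u t := by
  induction π generalizing s with
  | nil => simp [runPlan]
  | cons a π ih =>
    simp only [List.cons_append, runPlan, ih]
    constructor
    · rintro ⟨v, hv, u, hu, ht⟩
      exact ⟨u, ⟨v, hv, hu⟩, ht⟩
    · rintro ⟨u, ⟨v, hv, hu⟩, ht⟩
      exact ⟨v, hv, u, hu, ht⟩

theorem SE_append {P A S : Type} (M : LTS P A S) (π π' : List A) (s : S)
    (h : SE M π s) (h' : ∀ u, runPlan M π s u → SE M π' u) : SE M (π ++ π') s := by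
  induction π generalizing s with
  | nil => exact h' s rfl
  | cons a π ih =>
    exact ⟨h.1, fun v hv => ih v (h.2 v hv) fun u hu => h' u ⟨v, hv, hu⟩⟩

theorem IsWitness.append {P A S : Type} {M : LTS P A S} {φ ψ χ : KhForm P} {π π' : List A}
    (h : IsWitness M π φ ψ) (h' : IsWitness M π' ψ χ) : IsWitness M (π ++ π') φ χ := by
  refine ⟨fun s hs => SE_append M π π' s (h.1 s hs) fun u hu => h'.1 u (h.2 ⟨s, hs, hu⟩), ?_⟩
  rintro t ⟨s, hs, hst⟩
  obtain ⟨u, hu, ht⟩ := (runPlan_append M π π' s t).1 hst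
  exact h'.2 ⟨u, h.2 ⟨s, hs, hu⟩, ht⟩

/-- witness plans compose: if π witnesses Kh(φ,ψ) and π' witnesses
Kh(ψ,χ) then ππ' witnesses Kh(φ,χ); consequently ⟦Kh(φ,ψ)⟧ = S and ⟦Kh(ψ,χ)⟧ = S
imply ⟦Kh(φ,χ)⟧ = S. -/
theorem witness_compose
    (P A S : Type) [Countable P] [Countable A] [Nonempty S]
    (M : LTS P A S) (φ ψ χ : KhForm P) :
    (∀ π π' : List A, IsWitness M π φ ψ → IsWitness M π' ψ χ →
        IsWitness M (π ++ π') φ χ) ∧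
    (truth M (KhForm.kh φ ψ) = Set.univ → truth M (KhForm.kh ψ χ) = Set.univ →
        truth M (KhForm.kh φ χ) = Set.univ) := by
  refine ⟨fun π π' h h' => h.append h', fun h h' => ?_⟩
  obtain ⟨s₀⟩ := ‹Nonempty S›
  have hs : s₀ ∈ truth M (KhForm.kh φ ψ) := h ▸ Set.mem_univ s₀
  have hs' : s₀ ∈ truth M (KhForm.kh ψ χ) := h' ▸ Set.mem_univ s₀
  obtain ⟨π, hπ⟩ := hs
  obtain ⟨π', hπ'⟩ := hs'
  exact Set.eq_univ_of_forall fun _ => ⟨π ++ π', IsWitness.append hπ hπ'⟩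
end

section
/- Let I be a finite index set, and for each ℓ ∈ I let ψ_ℓ, χ_ℓ be Kh-free formulas. Let N = ⟨S, V⟩ determine the truth sets ⟦ψ_ℓ⟧, ⟦χ_ℓ⟧ ⊆ S, let K = {k ∈ I : ⟦ψ_k⟧ = ∅}, and let M be the LTS over S with, for distinct actions a_ℓ (ℓ ∈ I), R_{a_ℓ} = ⟦ψ_ℓ⟧ × ⟦χ_ℓ⟧ if ℓ ∈ I∖K and R_{a_ℓ} = ∅ otherwise (and R_b = ∅ for all other actions b). Let D ⊆ I×I, write D̄ = (I×I)∖D and C(D̄) for the reflexive-transitive closure of D̄ on I. Assume: (i) ⟦χ_ℓ⟧ ≠ ∅ for every ℓ ∈ I∖K; and (ii) ⟦χ_t⟧ ⊄ ⟦ψ_s⟧ for every (t,s) ∈ D. Then for every nonempty set X ⊆ S and every nonempty plan π = a_{i_1} a_{i_2} … a_{i_k} with all i_1,…,i_k ∈ I∖K: if X ⊆ SE(π) in M, then (i_1, i_k) ∈ C(D̄) and R_π(X) = ⟦χ_{i_k}⟧. -/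
theorem planImage_cons {P A S : Type} (M : LTS P A S) (b : A) (π : List A) (X : Set S) :
    planImage M (b :: π) X = planImage M π {u | ∃ s ∈ X, M.R b s u} := by
  ext t
  simp only [planImage, runPlan, Set.mem_ofPred_eq]
  constructor
  · rintro ⟨s, hs, u, hu, h⟩
    exact ⟨u, ⟨s, hs, hu⟩, h⟩
  · rintro ⟨u, ⟨s, hs, hu⟩, h⟩
    exact ⟨s, hs, u, hu, h⟩

/-- in the canonical model built from (S,V) with
R_{a_ℓ} = ⟦ψ_ℓ⟧ × ⟦χ_ℓ⟧ for ℓ ∈ I∖K (K = {k ∈ I : ⟦ψ_k⟧ = ∅}), R_{a_ℓ} = ∅ for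
ℓ ∈ K, and R_b = ∅ for all other actions, assuming ⟦χ_ℓ⟧ ≠ ∅ for ℓ ∈ I∖K and
⟦χ_t⟧ ⊄ ⟦ψ_s⟧ for (t,s) ∈ D: for every nonempty X ⊆ S and every nonempty plan
a_{i_1}…a_{i_k} with all indices in I∖K, if X ⊆ SE(π) then (i_1,i_k) ∈ C(D̄) and
R_π(X) = ⟦χ_{i_k}⟧. -/
theorem canonical_model_plan_claim
    (P A S ι : Type) [Countable P] [Countable A] [Nonempty S]
    (I : Finset ι) (ψ χ : ι → KhForm P)
    (hψ : ∀ ℓ ∈ I, KhFree (ψ ℓ)) (hχKhFree : ∀ ℓ ∈ I, KhFree (χ ℓ))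
    (a : ι → A) (ha : Function.Injective a)
    (M : LTS P A S)
    (hR : ∀ ℓ ∈ I, truth M (ψ ℓ) ≠ ∅ →
        ∀ s t : S, M.R (a ℓ) s t ↔ (s ∈ truth M (ψ ℓ) ∧ t ∈ truth M (χ ℓ)))
    (hRK : ∀ ℓ ∈ I, truth M (ψ ℓ) = ∅ → ∀ s t : S, ¬ M.R (a ℓ) s t)
    (hRo : ∀ b : A, (∀ ℓ ∈ I, b ≠ a ℓ) → ∀ s t : S, ¬ M.R b s t)
    (D : Finset (ι × ι)) (hD : D ⊆ I ×ˢ I)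
    (hi : ∀ ℓ ∈ I, truth M (ψ ℓ) ≠ ∅ → truth M (χ ℓ) ≠ ∅)
    (hii : ∀ ts ∈ D, ¬ truth M (χ ts.1) ⊆ truth M (ψ ts.2))
    (X : Set S) (hX : X.Nonempty)
    (is : List ι) (hne : is ≠ [])
    (his : ∀ i ∈ is, i ∈ I ∧ truth M (ψ i) ≠ ∅)
    (hSE : ∀ s ∈ X, SE M (is.map a) s) :
    CBar I D (is.head hne) (is.getLast hne) ∧
    planImage M (is.map a) X = truth M (χ (is.getLast hne)) := by
  induction is generalizing X with
  | nil => exact absurd rfl hne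
  | cons i l ih =>
    obtain ⟨hiI, hiK⟩ := his i (by simp)
    have hRi := hR i hiI hiK
    have hXψ : X ⊆ truth M (ψ i) := by
      intro s hs
      obtain ⟨u, hu⟩ := (hSE s hs).1
      exact ((hRi s u).1 hu).1
    have him : {u | ∃ s ∈ X, M.R (a i) s u} = truth M (χ i) := by
      ext u
      constructor
      · rintro ⟨s, -, hu⟩
        exact ((hRi s u).1 hu).2
      · intro hu
        obtain ⟨s, hs⟩ := hX
        exact ⟨s, hs, (hRi s u).2 ⟨hXψ hs, hu⟩⟩
    rw [List.map_cons, planImage_cons, him]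
    cases l with
    | nil => exact ⟨⟨hiI, hiI, .refl⟩, by simp [planImage, runPlan]⟩
    | cons j l =>
      have hχSE : ∀ u ∈ truth M (χ i), SE M ((j :: l).map a) u := by
        intro u hu
        rw [← him] at hu
        obtain ⟨s, hs, hsu⟩ := hu
        exact (hSE s hs).2 u hsu
      obtain ⟨⟨hjI, hlast, hstep⟩, himage⟩ := ih (truth M (χ i))
        (Set.nonempty_iff_ne_empty.2 (hi i hiI hiK)) (by simp)
        (fun k hk => his k (List.mem_cons_of_mem _ hk)) hχSE
      have hij : (i, j) ∉ D := by
        intro hmem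
        refine hii (i, j) hmem fun u hu => ?_
        obtain ⟨v, hv⟩ := (hχSE u hu).1
        exact ((hR j hjI (his j (by simp)).2 u v).1 hv).1
      exact ⟨⟨hiI, hlast, .head ⟨hiI, hjI, hij⟩ hstep⟩, himage⟩
end

section
/- Small model property for conjunctions of E- and A-formulas: let α_1,…,α_m and β_1,…,β_n be Kh-free (propositional) formulas, and suppose the formula (⋀_{i=1}^m A α_i) ∧ (⋀_{j=1}^n E β_j) is satisfiable in some LTS. Then it is satisfiable in an LTS M = ⟨S, (R_a)_{a∈Act}, V⟩ with |S| ≤ n + 1, where n is the number of E-conjuncts. -/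
theorem SE.exists_runPlan {P A S : Type} {M : LTS P A S} {π : List A} {s : S} (h : SE M π s) :
    ∃ t, runPlan M π s t := by
  induction π generalizing s with
  | nil => exact ⟨s, rfl⟩
  | cons a π ih =>
    obtain ⟨⟨u, hu⟩, h⟩ := h
    obtain ⟨t, ht⟩ := ih (h u hu)
    exact ⟨t, u, hu, ht⟩

theorem truth_bot {P A S : Type} (M : LTS P A S) (p : P) : truth M (KhForm.bot p) = ∅ := by
  simp [KhForm.bot, KhForm.and, truth]

/-- The truth of a Kh-free formula depends only on the valuation, hence is preserved by pulling
the valuation back along a map of states. -/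
theorem mem_truth_iff_of_khFree {P A S T : Type} {M : LTS P A S} {N : LTS P A T} (f : T → S)
    (hV : ∀ q, N.V q = f ⁻¹' M.V q) {φ : KhForm P} (hφ : KhFree φ) (t : T) :
    t ∈ truth N φ ↔ f t ∈ truth M φ := by
  induction φ with
  | prop q => simp [truth, hV]
  | neg φ ih => exact not_congr (ih hφ)
  | or φ ψ ih₁ ih₂ => exact or_congr (ih₁ hφ.1) (ih₂ hφ.2)
  | kh => exact hφ.elim

/-- small model property for conjunctions of A- and E-formulas:
if (⋀_i Aα_i) ∧ (⋀_j Eβ_j) (with the α_i, β_j Kh-free) is satisfiable, it is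
satisfiable in an LTS with at most n+1 states, n the number of E-conjuncts. -/
theorem small_model_for_AE_conjunctions
    (P A : Type) [Countable P] [Countable A] [Infinite A]
    (p : P) (m n : ℕ) (α : Fin m → KhForm P) (β : Fin n → KhForm P)
    (hα : ∀ i, KhFree (α i)) (hβ : ∀ j, KhFree (β j))
    (hsat : ∃ (S : Type) (_ : Nonempty S) (M : LTS P A S) (s : S),
        (∀ i, s ∈ truth M (Aform p (α i))) ∧ (∀ j, s ∈ truth M (Eform p (β j)))) :
    ∃ (S : Type) (_ : Nonempty S) (_ : Fintype S) (M : LTS P A S) (s : S),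
        ((∀ i, s ∈ truth M (Aform p (α i))) ∧ (∀ j, s ∈ truth M (Eform p (β j)))) ∧
        Fintype.card S ≤ n + 1 := by
  obtain ⟨S, -, M, s, hA, hE⟩ := hsat
  simp only [mem_truth_Aform, mem_truth_Eform] at hA hE ⊢
  choose w hw using hE
  let f : Option (Fin n) → S := fun o => o.elim s w
  let N : LTS P A (Option (Fin n)) := ⟨fun _ _ _ => False, fun q => f ⁻¹' M.V q⟩
  have key {φ : KhForm P} (hφ : KhFree φ) (t : Option (Fin n)) :
      t ∈ truth N φ ↔ f t ∈ truth M φ :=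
    mem_truth_iff_of_khFree f (fun _ => rfl) hφ t
  exact ⟨Option (Fin n), ⟨none⟩, inferInstance, N, none,
    ⟨fun i t => (key (hα i) t).2 (hA i (f t)), fun j => ⟨some j, (key (hβ j) _).2 (hw j)⟩⟩,
    by simp⟩
end

section
/- Correctness of the guessing step: let φ_cur be an L(Kh) formula, let φ⁺_cur be a conjunction of positive atoms, let φ⁻_cur be a conjunction of negative atoms, and let Kh(ψ,χ) be a positive atom occurring in φ_cur. Then φ_cur ∧ φ⁺_cur ∧ φ⁻_cur is satisfiable if and only if at least one of the following two formulas is satisfiable: (1) φ_cur[⊤/Kh(ψ,χ)] ∧ (φ⁺_cur ∧ Kh(ψ,χ)) ∧ φ⁻_cur; (2) φ_cur[⊥/Kh(ψ,χ)] ∧ φ⁺_cur ∧ (φ⁻_cur ∧ ¬Kh(ψ,χ)); where φ_cur[⊤/Kh(ψ,χ)] (resp. φ_cur[⊥/Kh(ψ,χ)]) is obtained from φ_cur by replacing all occurrences of Kh(ψ,χ) with ⊤ (resp. ⊥). -/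
/-- Replacement of equivalents, in a fixed model: only the equality of the two truth sets in
that model is needed, not validity of the equivalence. -/
theorem truth_substKh {P A S : Type} [DecidableEq P] (M : LTS P A S) {ψ χ ρ : KhForm P}
    (h : truth M (.kh ψ χ) = truth M ρ) (φ : KhForm P) :
    truth M (substKh ψ χ ρ φ) = truth M φ := by
  induction φ with
  | prop q => rfl
  | neg φ ih => simp only [substKh, truth, ih]
  | or φ₁ φ₂ ih₁ ih₂ => simp only [substKh, truth, ih₁, ih₂]
  | kh φ₁ φ₂ ih₁ ih₂ =>
    unfold substKh
    split_ifs with hc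
    · rw [hc.1, hc.2, h]
    · simp only [truth, ih₁, ih₂]

theorem truth_top {P A S : Type} (M : LTS P A S) (p : P) :
    truth M (KhForm.top p) = Set.univ := by
  simp [KhForm.top, truth_bot, truth]

/-- The truth of a `Kh` formula does not depend on the state. -/
theorem truth_kh_eq_univ {P A S : Type} {M : LTS P A S} {ψ χ : KhForm P} {s : S}
    (h : s ∈ truth M (.kh ψ χ)) : truth M (.kh ψ χ) = Set.univ :=
  Set.eq_univ_of_forall fun _ => h

theorem truth_kh_eq_empty {P A S : Type} {M : LTS P A S} {ψ χ : KhForm P} {s : S}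
    (h : s ∉ truth M (.kh ψ χ)) : truth M (.kh ψ χ) = ∅ :=
  Set.eq_empty_of_forall_notMem fun _ ht => h ht

/-- correctness of the guessing step: φ_cur ∧ φ⁺_cur ∧ φ⁻_cur is
satisfiable iff φ_cur[⊤/Kh(ψ,χ)] ∧ (φ⁺_cur ∧ Kh(ψ,χ)) ∧ φ⁻_cur is satisfiable or
φ_cur[⊥/Kh(ψ,χ)] ∧ φ⁺_cur ∧ (φ⁻_cur ∧ ¬Kh(ψ,χ)) is satisfiable. Here φ⁺_cur
(resp. φ⁻_cur) is a conjunction of positive (resp. negative) atoms, given by a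
list of pairs of Kh-free formulas. -/
theorem guessing_step_correct
    (P A : Type) [Countable P] [Countable A] [Infinite A] [DecidableEq P]
    (p : P) (φcur : KhForm P)
    (pos neg : List (KhForm P × KhForm P))
    (hpos : ∀ pr ∈ pos, KhFree pr.1 ∧ KhFree pr.2)
    (hneg : ∀ pr ∈ neg, KhFree pr.1 ∧ KhFree pr.2)
    (ψ χ : KhForm P) (hψ : KhFree ψ) (hχ : KhFree χ)
    (hocc : IsSubformula (KhForm.kh ψ χ) φcur) :
    (∃ (S : Type) (_ : Nonempty S) (M : LTS P A S) (s : S),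
        s ∈ truth M φcur ∧
        (∀ pr ∈ pos, s ∈ truth M (KhForm.kh pr.1 pr.2)) ∧
        (∀ pr ∈ neg, s ∈ truth M (KhForm.neg (.kh pr.1 pr.2)))) ↔
    ((∃ (S : Type) (_ : Nonempty S) (M : LTS P A S) (s : S),
        s ∈ truth M (substKh ψ χ (KhForm.top p) φcur) ∧
        ((∀ pr ∈ pos, s ∈ truth M (KhForm.kh pr.1 pr.2)) ∧
          s ∈ truth M (KhForm.kh ψ χ)) ∧
        (∀ pr ∈ neg, s ∈ truth M (KhForm.neg (.kh pr.1 pr.2)))) ∨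
     (∃ (S : Type) (_ : Nonempty S) (M : LTS P A S) (s : S),
        s ∈ truth M (substKh ψ χ (KhForm.bot p) φcur) ∧
        (∀ pr ∈ pos, s ∈ truth M (KhForm.kh pr.1 pr.2)) ∧
        ((∀ pr ∈ neg, s ∈ truth M (KhForm.neg (.kh pr.1 pr.2))) ∧
          s ∈ truth M (KhForm.neg (.kh ψ χ))))) := by
  have hsubst_top : ∀ {S : Type} {M : LTS P A S} {s : S}, s ∈ truth M (.kh ψ χ) →
      truth M (substKh ψ χ (KhForm.top p) φcur) = truth M φcur := fun h =>
    truth_substKh _ ((truth_kh_eq_univ h).trans (truth_top _ p).symm) _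
  have hsubst_bot : ∀ {S : Type} {M : LTS P A S} {s : S}, s ∉ truth M (.kh ψ χ) →
      truth M (substKh ψ χ (KhForm.bot p) φcur) = truth M φcur := fun h =>
    truth_substKh _ ((truth_kh_eq_empty h).trans (truth_bot _ p).symm) _
  constructor
  · rintro ⟨S, hS, M, s, hcur, hp, hn⟩
    by_cases h : s ∈ truth M (.kh ψ χ)
    · exact .inl ⟨S, hS, M, s, (hsubst_top h).symm ▸ hcur, ⟨hp, h⟩, hn⟩
    · exact .inr ⟨S, hS, M, s, (hsubst_bot h).symm ▸ hcur, hp, hn, h⟩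
  · rintro (⟨S, hS, M, s, hcur, ⟨hp, h⟩, hn⟩ | ⟨S, hS, M, s, hcur, hp, hn, h⟩)
    · exact ⟨S, hS, M, s, hsubst_top h ▸ hcur, hp, hn⟩
    · exact ⟨S, hS, M, s, hsubst_bot h ▸ hcur, hp, hn⟩
end
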